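/- The languages L₁ = {w ∈ {a,b,c}* \ {ε} : |w|_c ≤ |w|_a} and L₂ = {w ∈ {a,b,c}* \ {ε} : |w|_c ≤ |w|_b} are each binary-PODWA-recognizable, but their intersection L₁ ∩ L₂ is not binary-PODWA-recognizable. Hence the class of binary-PODWA-recognizable languages is not closed under intersection. -/

import Mathlib

/-- A deterministic weighted automaton (DWA) over alphabet `A` with state space `Q`. -/
structure DWA (A : Type) (Q : Type) where
  init : Q
  δ : Q → A → Q
  c : Q → A → ℤ

/-- The extended transition function `δ̂`. -/
def DWA.run {A Q : Type} (M : DWA A Q) (q : Q) (w : List A) : Q :=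
  w.foldl M.δ q

/-- The accumulated weight of the run on `w` starting in state `q`. -/
def DWA.valFrom {A Q : Type} (M : DWA A Q) : Q → List A → ℤ
  | _, [] => 0
  | q, x :: w => M.c q x + M.valFrom (M.δ q x) w

/-- The value `A(w)` of a word: the sum of the weights along the run from the initial state. -/
def DWA.val {A Q : Type} (M : DWA A Q) (w : List A) : ℤ :=
  M.valFrom M.init w

/-- The three-letter alphabet `{a, b, c}`. -/
inductive ABC where
  | a : ABC
  | b : ABC
  | c : ABC
deriving DecidableEq

theorem DWA.run_append {A Q : Type} (M : DWA A Q) (q : Q) (u v : List A) :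
    M.run q (u ++ v) = M.run (M.run q u) v := by
  simp [DWA.run]

theorem DWA.valFrom_append {A Q : Type} (M : DWA A Q) (u v : List A) : ∀ q : Q,
    M.valFrom q (u ++ v) = M.valFrom q u + M.valFrom (M.run q u) v := by
  induction u with
  | nil => intro q; simp [DWA.valFrom, DWA.run]
  | cons x u ih => intro q; simp [DWA.valFrom, DWA.run, ih, add_assoc]

theorem DWA.run_replicate {A Q : Type} (M : DWA A Q) (x : A) (n : ℕ) : ∀ q : Q,
    M.run q (List.replicate n x) = (fun q => M.δ q x)^[n] q := by
  induction n with
  | zero => intro q; simp [DWA.run]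
  | succ n ih => intro q; simpa [DWA.run, List.replicate_succ] using ih (M.δ q x)

theorem DWA.exists_period {Q : Type} [Finite Q] (M : DWA ABC Q) :
    ∃ N : ℕ, 0 < N ∧ ∀ (x : ABC) (q : Q),
      M.run (M.run q (List.replicate N x)) (List.replicate N x)
        = M.run q (List.replicate N x) := by
  have : Finite ABC := Finite.of_surjective
    (fun i : Fin 3 => if i = 0 then ABC.a else if i = 1 then ABC.b else ABC.c)
    (by rintro (_ | _ | _)
        · exact ⟨0, by simp⟩
        · exact ⟨1, by simp⟩
        · exact ⟨2, by simp⟩)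
  obtain ⟨m, n, hmn, h⟩ := Finite.exists_ne_map_eq_of_infinite
    (fun (n : ℕ) (x : ABC) (q : Q) => (fun q => M.δ q x)^[n] q)
  wlog hlt : m < n generalizing m n
  · exact this n m hmn.symm h.symm (by omega)
  obtain ⟨p, rfl⟩ := Nat.exists_eq_add_of_lt hlt
  refine ⟨(p + 1) * (m + 1), by positivity, fun x q => ?_⟩
  have key : ∀ k j : ℕ, (fun q => M.δ q x)^[m + j + (p + 1) * k] q
      = (fun q => M.δ q x)^[m + j] q := by
    intro k j
    induction k with
    | zero => simp
    | succ k ih =>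
      rw [← ih]
      have h1 := congrFun (congrFun h x) ((fun q => M.δ q x)^[j + (p + 1) * k] q)
      simp only [← Function.iterate_add_apply] at h1
      rw [show m + j + (p + 1) * (k + 1) = m + p + 1 + (j + (p + 1) * k) by ring,
        show m + j + (p + 1) * k = m + (j + (p + 1) * k) by ring]
      exact h1.symm
  rw [M.run_replicate, M.run_replicate, ← Function.iterate_add_apply]
  have := key (m + 1) (p * (m + 1) + 1)
  rw [show m + (p * (m + 1) + 1) = (p + 1) * (m + 1) by ring] at this
  exact this

theorem DWA.pump {A Q : Type} (M : DWA A Q) (q : Q) (x : A) (N : ℕ)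
    (h : M.run q (List.replicate N x) = q) (i : ℕ) :
    M.run q (List.replicate (N * i) x) = q ∧
    M.valFrom q (List.replicate (N * i) x) = i * M.valFrom q (List.replicate N x) := by
  induction i with
  | zero => simp [DWA.run, DWA.valFrom]
  | succ i ih =>
    rw [Nat.mul_succ, List.replicate_add, M.run_append, M.valFrom_append, ih.1, ih.2]
    refine ⟨h, ?_⟩
    push_cast; ring

theorem DWA.pump' {A Q : Type} (M : DWA A Q) (q : Q) (x : A) (N : ℕ)
    (h : M.run (M.run q (List.replicate N x)) (List.replicate N x)
        = M.run q (List.replicate N x)) (i : ℕ) :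
    M.run q (List.replicate (N + N * i) x) = M.run q (List.replicate N x) ∧
    M.valFrom q (List.replicate (N + N * i) x) = M.valFrom q (List.replicate N x)
      + i * M.valFrom (M.run q (List.replicate N x)) (List.replicate N x) := by
  have := M.pump _ x N h i
  rw [List.replicate_add, M.run_append, M.valFrom_append, this.1, this.2]
  exact ⟨rfl, rfl⟩

theorem no_affine (v α β γ : ℤ)
    (h : ∀ i j k : ℕ, 0 < v + i * α + j * β + k * γ ↔ (k ≤ i ∧ k ≤ j)) : False := by
  have h0 := (h 0 0 0).2 (by simp)
  have h1 : v + γ ≤ 0 := by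
    have := (h 0 0 1).not.2 (by simp)
    push_cast at this; linarith
  have ha : α ≤ 0 := by
    by_contra hc
    have := (h ((v + γ).natAbs + 1) 0 1).not.2 (by simp)
    push_cast at this
    have h2 := neg_abs_le (v + γ)
    have h3 := abs_nonneg (v + γ)
    push Not at hc
    nlinarith
  have hb : β ≤ 0 := by
    by_contra hc
    have := (h 0 ((v + γ).natAbs + 1) 1).not.2 (by simp)
    push_cast at this
    have h2 := neg_abs_le (v + γ)
    have h3 := abs_nonneg (v + γ)
    push Not at hc
    nlinarith
  have := (h 1 1 1).2 (by simp)
  push_cast at this h0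
  linarith

/-- Two-state automaton with value `1 + ∑ f`. -/
def oneDWA (f : ABC → ℤ) : DWA ABC Bool where
  init := false
  δ := fun _ _ => true
  c := fun q x => (if q then 0 else 1) + f x

theorem oneDWA_valFrom_true (f : ABC → ℤ) (w : List ABC) :
    (oneDWA f).valFrom true w = (w.map f).sum := by
  induction w with
  | nil => rfl
  | cons x w ih =>
    have : (oneDWA f).valFrom true (x :: w) = (0 + f x) + (oneDWA f).valFrom true w := rfl
    rw [this, ih]; simp

theorem oneDWA_val (f : ABC → ℤ) (w : List ABC) (hw : w ≠ []) :
    (oneDWA f).val w = 1 + (w.map f).sum := by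
  cases w with
  | nil => exact absurd rfl hw
  | cons x w =>
    have : (oneDWA f).val (x :: w) = (1 + f x) + (oneDWA f).valFrom true w := rfl
    rw [this, oneDWA_valFrom_true]; simp [add_assoc]

theorem sum_counts (y : ABC) (hy : y ≠ ABC.c) (w : List ABC) :
    (w.map (fun x => if x = y then (1 : ℤ) else if x = ABC.c then -1 else 0)).sum
      = w.count y - w.count ABC.c := by
  induction w with
  | nil => simp
  | cons x w ih =>
    rw [List.map_cons, List.sum_cons, ih, List.count_cons, List.count_cons]
    rcases x with _ | _ | _ <;> rcases y with _ | _ | _ <;> simp at hy ⊢ <;> ring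

theorem recog (y : ABC) (hy : y ≠ ABC.c) :
    ∃ (Q : Type) (_ : Fintype Q) (M : DWA ABC Q),
        ∀ w : List ABC, w ≠ [] → (0 < M.val w ↔ w.count ABC.c ≤ w.count y) := by
  refine ⟨Bool, inferInstance, 
    oneDWA (fun x => if x = y then (1 : ℤ) else if x = ABC.c then -1 else 0), fun w hw => ?_⟩
  · rw [oneDWA_val _ w hw, sum_counts y hy]
    omega

/-- the languages `L₁ = {w ≠ ε : |w|_c ≤ |w|_a}` and
`L₂ = {w ≠ ε : |w|_c ≤ |w|_b}` are each binary-PODWA-recognizable, but their intersection is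
not; hence the class of binary-PODWA-recognizable languages is not closed under
intersection. -/
theorem binary_podwa_not_closed_under_intersection :
    (∃ (Q : Type) (_ : Fintype Q) (M : DWA ABC Q),
        ∀ w : List ABC, w ≠ [] → (0 < M.val w ↔ w.count ABC.c ≤ w.count ABC.a)) ∧
    (∃ (Q : Type) (_ : Fintype Q) (M : DWA ABC Q),
        ∀ w : List ABC, w ≠ [] → (0 < M.val w ↔ w.count ABC.c ≤ w.count ABC.b)) ∧
    ¬ ∃ (Q : Type) (_ : Fintype Q) (M : DWA ABC Q),
        ∀ w : List ABC, w ≠ [] →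
          (0 < M.val w ↔
            (w.count ABC.c ≤ w.count ABC.a ∧ w.count ABC.c ≤ w.count ABC.b)) := by
  refine ⟨recog _ (by simp), recog _ (by simp), ?_⟩
  rintro ⟨Q, _, M, hM⟩
  obtain ⟨N, hN, hp⟩ := M.exists_period
  let A := List.replicate N ABC.a
  let B := List.replicate N ABC.b
  let C := List.replicate N ABC.c
  let q₁ := M.run M.init A
  let q₂ := M.run q₁ B
  let q₃ := M.run q₂ C
  refine no_affine (M.valFrom M.init A + M.valFrom q₁ B + M.valFrom q₂ C)
    (M.valFrom q₁ A) (M.valFrom q₂ B) (M.valFrom q₃ C) (fun i j k => ?_)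
  have h := hM (List.replicate (N + N * i) ABC.a ++ (List.replicate (N + N * j) ABC.b ++
    List.replicate (N + N * k) ABC.c)) (by simp; omega)
  have ea := M.pump' M.init ABC.a N (hp _ _) i
  have eb := M.pump' q₁ ABC.b N (hp _ _) j
  have ec := M.pump' q₂ ABC.c N (hp _ _) k
  rw [DWA.val, M.valFrom_append, M.valFrom_append, ea.1, ea.2, eb.1, eb.2, ec.2] at h
  simp [List.count_append, List.count_replicate, hN] at h
  rw [← h]
  have e : ∀ a b c d e f : ℤ, a + b + c + d + e + f = a + d + (b + e + (c + f)) := by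
    intros; ring
  rw [e]
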